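/- Let w and m be positive integers with w + m odd. Then V_{w,m} = S_{w,m}. In particular, every multiple zeta value ζ(n_1,…,n_m) of depth m and weight w (i.e. n_i ≥ 1, n_m ≥ 2, n_1+⋯+n_m = w) is a ℚ-linear combination of monomials of weight < w, monomials of depth < m, and products of two monomials of positive weight with total weight ≤ w and total depth ≤ m. -/

import Mathlib

/-- The multiple zeta value `ζ(n_1,…,n_p) = Σ_{0<k_1<⋯<k_p} 1/(k_1^{n_1}⋯k_p^{n_p})`. -/
noncomputable def mzv (p : ℕ) (n : Fin p → ℕ) : ℝ :=
  ∑' k : {k : Fin p → ℕ // StrictMono k ∧ ∀ i, 0 < k i},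
    ∏ i, (((k.1 i : ℝ)) ^ (n i))⁻¹

/-- An index (composition) `(n_1,…,n_{p+1})` for a multiple zeta value. -/
abbrev MZIndex : Type := (p : ℕ) × (Fin (p + 1) → ℕ)

/-- Admissibility: all `n_i ≥ 1` and the last entry is `≥ 2`. -/
def MZIndex.Admissible (z : MZIndex) : Prop :=
  (∀ i, 1 ≤ z.2 i) ∧ 2 ≤ z.2 (Fin.last z.1)

/-- The weight `n_1 + ⋯ + n_{p+1}` of an index. -/
def MZIndex.weight (z : MZIndex) : ℕ := ∑ i, z.2 i

/-- The depth `p + 1` of an index. -/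
def MZIndex.depth (z : MZIndex) : ℕ := z.1 + 1

/-- `x` is a monomial of weight `w'` and depth `m'`: `x = π^{2a}·ζ(s⁽¹⁾)⋯ζ(s⁽ᵏ⁾)` with
admissible indices `s⁽ⁱ⁾`, `w' = 2a + Σ weights`, `m' = Σ depths`. -/
def IsMonomial (x : ℝ) (w' m' : ℕ) : Prop :=
  ∃ (a : ℕ) (zs : List MZIndex), (∀ z ∈ zs, z.Admissible) ∧
    x = Real.pi ^ (2 * a) * (zs.map fun z => mzv (z.1 + 1) z.2).prod ∧
    w' = 2 * a + (zs.map MZIndex.weight).sum ∧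
    m' = (zs.map MZIndex.depth).sum

/-- `V_{w,m}`: the ℚ-span of all monomials of weight `≤ w` and depth `≤ m`. -/
noncomputable def Vspan (w m : ℕ) : Submodule ℚ ℝ :=
  Submodule.span ℚ {x | ∃ w' m', w' ≤ w ∧ m' ≤ m ∧ IsMonomial x w' m'}

/-- `S_{w,m} = V_{w−1,m} + V_{w,m−1} + Σ V_{w₁,m₁}·V_{w₂,m₂}` (sum over `w₁,w₂ ≥ 1`,
`w₁+w₂ ≤ w`, `m₁+m₂ ≤ m`). -/
noncomputable def Sspan (w m : ℕ) : Submodule ℚ ℝ :=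
  Vspan (w - 1) m ⊔ Vspan w (m - 1) ⊔
    ⨆ (w₁ : ℕ) (w₂ : ℕ) (m₁ : ℕ) (m₂ : ℕ) (_ : 1 ≤ w₁) (_ : 1 ≤ w₂)
      (_ : w₁ + w₂ ≤ w) (_ : m₁ + m₂ ≤ m),
      Submodule.span ℚ {x | ∃ y ∈ Vspan w₁ m₁, ∃ z ∈ Vspan w₂ m₂, x = y * z}

/-!
Summing over the largest index last, `ζ(n_1,…,n_{p+1}) = ∑_{k ≥ 1} k^{-b} T(k)` with `b = n_{p+1}`
and `T(k)` the nested sum over `k_1 < ⋯ < k_p < k`. By induction on `p`, the summand extends to a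
function on `ℤ` that is even or odd, according to the parity of `w + p` for the weight `w`, up to
terms of lower depth, and that is a combination of poles `k^{-v}` and of sums
`∑_d a_d (k - d)^{-u}` whose coefficients `a_d` involve truncated multiple zeta values. The
inductive step takes a primitive for the forward difference, which replaces `a` by its partial sums,
and divides by a power of `k` using partial fractions.

The extension is then summed over `-N ≤ k ≤ N` with `N → ∞`. The sum of `(k - d)^{-u}` does not
depend on `d`: it vanishes for odd `u` and is a rational multiple of `π^u` for even `u`, so the
total lies in `V_{w,p}`. For `w + p` even it equals `2 ζ(n_1,…,n_{p+1})` plus terms of `V_{w,p}`.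
-/

open Finset Filter Topology Asymptotics

section Monomials

lemma Vspan_mono {w w' m m' : ℕ} (hw : w ≤ w') (hm : m ≤ m') : Vspan w m ≤ Vspan w' m' :=
  Submodule.span_mono fun _ ⟨a, b, ha, hb, h⟩ => ⟨a, b, ha.trans hw, hb.trans hm, h⟩

lemma IsMonomial.mem_Vspan {x : ℝ} {w m : ℕ} (hx : IsMonomial x w m) : x ∈ Vspan w m :=
  Submodule.subset_span ⟨w, m, le_rfl, le_rfl, hx⟩

lemma IsMonomial.mul {x y : ℝ} {w m w' m' : ℕ} (hx : IsMonomial x w m) (hy : IsMonomial y w' m') :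
    IsMonomial (x * y) (w + w') (m + m') := by
  obtain ⟨a, zs, hz, rfl, rfl, rfl⟩ := hx
  obtain ⟨a', zs', hz', rfl, rfl, rfl⟩ := hy
  refine ⟨a + a', zs ++ zs', ?_, ?_, ?_, ?_⟩
  · intro z hz''
    rcases List.mem_append.1 hz'' with h | h
    exacts [hz z h, hz' z h]
  · simp only [List.map_append, List.prod_append]; ring
  · simp only [List.map_append, List.sum_append]; ring
  · simp only [List.map_append, List.sum_append]

lemma Vspan_mul_mem {x y : ℝ} {w m w' m' : ℕ} (hx : x ∈ Vspan w m) (hy : y ∈ Vspan w' m') :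
    x * y ∈ Vspan (w + w') (m + m') := by
  have h := Submodule.mul_mem_mul hx hy
  rw [Vspan, Vspan, Submodule.span_mul_span] at h
  refine Submodule.span_mono ?_ h
  rintro _ ⟨x, ⟨a, b, ha, hb, hx⟩, y, ⟨a', b', ha', hb', hy⟩, rfl⟩
  exact ⟨a + a', b + b', by omega, by omega, hx.mul hy⟩

lemma pi_pow_mem_Vspan (a : ℕ) : Real.pi ^ (2 * a) ∈ Vspan (2 * a) 0 :=
  IsMonomial.mem_Vspan ⟨a, [], by simp⟩

lemma one_mem_Vspan (w m : ℕ) : (1 : ℝ) ∈ Vspan w m :=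
  Vspan_mono (Nat.zero_le w) (Nat.zero_le m) (by simpa using pi_pow_mem_Vspan 0)

lemma mzv_mem_Vspan (p : ℕ) (n : Fin (p + 1) → ℕ) (hn : ∀ i, 1 ≤ n i) (hl : 2 ≤ n (Fin.last p)) :
    mzv (p + 1) n ∈ Vspan (∑ i, n i) (p + 1) :=
  IsMonomial.mem_Vspan ⟨0, [⟨p, n⟩], by simpa [MZIndex.Admissible] using ⟨hn, hl⟩, by simp,
    by simp [MZIndex.weight], by simp [MZIndex.depth]⟩

end Monomials

section NestedSums

/-- The truncated nested sum `∑_{0 < k_1 < ⋯ < k_p < N} k_1^{-n_1} ⋯ k_p^{-n_p}`. The chain includes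
`0 < N`, so that the value at `N = 0` is `0` in depth `0` too. -/
noncomputable def truncMzv : (p : ℕ) → (Fin p → ℕ) → ℕ → ℝ
  | 0, _, N => if 0 < N then 1 else 0
  | p + 1, n, N => ∑ j ∈ range N, (j : ℝ)⁻¹ ^ n (Fin.last p) * truncMzv p (Fin.init n) j

lemma truncMzv_nonneg {p : ℕ} (n : Fin p → ℕ) (N : ℕ) : 0 ≤ truncMzv p n N := by
  induction p generalizing N with
  | zero => unfold truncMzv; positivity
  | succ p ih => exact sum_nonneg fun j _ => mul_nonneg (by positivity) (ih _ j)

/-- The index set `0 < k_1 < ⋯ < k_p < N` of a nested sum; `N = ⊤` is the index set of a full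
multiple zeta value. -/
def chains (p : ℕ) (N : ℕ∞) : Set (Fin p → ℕ) :=
  {k | StrictMono k ∧ (∀ i, 0 < k i) ∧ (∀ i, (k i : ℕ∞) < N) ∧ 0 < N}

lemma snoc_mem_chains {p : ℕ} {N : ℕ∞} {k : Fin p → ℕ} {j : ℕ} :
    (Fin.snoc k j : Fin (p + 1) → ℕ) ∈ chains (p + 1) N ↔ (j : ℕ∞) < N ∧ k ∈ chains p j := by
  constructor
  · rintro ⟨hmono, hpos, hlt, -⟩
    have hkj (i : Fin p) : k i < j := by simpa using hmono i.castSucc_lt_last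
    exact ⟨by simpa using hlt (Fin.last p),
      fun a b hab => by simpa using hmono (Fin.castSucc_lt_castSucc_iff.2 hab),
      fun i => by simpa using hpos i.castSucc, fun i => by exact_mod_cast hkj i,
      by simpa using hpos (Fin.last p)⟩
  · rintro ⟨hjN, hmono, hpos, hlt, hj⟩
    have hkj (i : Fin p) : (k i : ℕ∞) < N := (hlt i).trans hjN
    refine ⟨?_, ?_, ?_, hj.trans hjN⟩
    · have hkj' (i : Fin p) : k i < j := by exact_mod_cast hlt i
      simpa [StrictMono, Fin.forall_fin_succ', hkj', Fin.castSucc_lt_last,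
        (Fin.castSucc_lt_last _).not_gt] using fun a b => @hmono a b
    · simpa [Fin.forall_fin_succ', hpos] using hj
    · simpa [Fin.forall_fin_succ', hkj] using hjN

/-- The nested sum over `chains p N`, valued in `ℝ≥0∞` so that reindexing needs no summability. -/
noncomputable def chainSum (p : ℕ) (n : Fin p → ℕ) (N : ℕ∞) : ENNReal :=
  ∑' k, (chains p N).indicator (fun k => ENNReal.ofReal (∏ i, (k i : ℝ)⁻¹ ^ n i)) k

lemma chainSum_succ {p : ℕ} (n : Fin (p + 1) → ℕ) (N : ℕ∞) :
    chainSum (p + 1) n N = ∑' j : ℕ, {j : ℕ | (j : ℕ∞) < N}.indicator (fun j =>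
      ENNReal.ofReal ((j : ℝ)⁻¹ ^ n (Fin.last p)) * chainSum p (Fin.init n) j) j := by
  have hprod (k : Fin p → ℕ) (j : ℕ) :
      ENNReal.ofReal (∏ i, ((Fin.snoc k j : Fin (p + 1) → ℕ) i : ℝ)⁻¹ ^ n i) =
        ENNReal.ofReal ((j : ℝ)⁻¹ ^ n (Fin.last p)) *
          ENNReal.ofReal (∏ i, (k i : ℝ)⁻¹ ^ Fin.init n i) := by
    rw [Fin.prod_univ_castSucc, mul_comm, ENNReal.ofReal_mul (by positivity)]
    simp only [Fin.snoc_last, Fin.snoc_castSucc, Fin.init]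
  rw [chainSum, ← (Fin.snocEquiv fun _ => ℕ).tsum_eq, ENNReal.tsum_prod']
  refine tsum_congr fun j => ?_
  classical
  change ∑' k : Fin p → ℕ, (chains (p + 1) N).indicator _ (Fin.snoc k j : Fin (p + 1) → ℕ) = _
  simp only [Set.indicator_apply, snoc_mem_chains, hprod, Set.mem_ofPred_eq, chainSum,
    ← ENNReal.tsum_mul_left]
  split_ifs with hj
  · simp only [hj, true_and, mul_ite, mul_zero]
  · simp only [hj, false_and, if_false, tsum_zero]

lemma chainSum_natCast {p : ℕ} (n : Fin p → ℕ) (N : ℕ) :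
    chainSum p n N = ENNReal.ofReal (truncMzv p n N) := by
  induction p generalizing N with
  | zero => simp [chainSum, chains, truncMzv, Set.indicator_apply, Subsingleton.strictMono,
      apply_ite, Nat.pos_iff_ne_zero]
  | succ p ih =>
    rw [chainSum_succ, tsum_eq_sum (s := range N) fun j hj =>
      Set.indicator_of_notMem (by simpa using hj) _, truncMzv, ENNReal.ofReal_sum_of_nonneg
        fun j _ => mul_nonneg (by positivity) (truncMzv_nonneg _ j)]
    refine sum_congr rfl fun j hj => ?_
    rw [Set.indicator_of_mem (by simpa using hj), ih, ENNReal.ofReal_mul (by positivity)]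

lemma chainSum_top_toReal {p : ℕ} (n : Fin p → ℕ) : (chainSum p n ⊤).toReal = mzv p n := by
  have hset : chains p ⊤ = {k | StrictMono k ∧ ∀ i, 0 < k i} := by ext; simp [chains]
  rw [chainSum, ← _root_.tsum_subtype, hset, ENNReal.tsum_toReal_eq fun _ => ENNReal.ofReal_ne_top]
  refine tsum_congr fun k => ?_
  rw [ENNReal.toReal_ofReal (by positivity)]
  simp only [inv_pow]

lemma mzv_succ_eq_tsum {p : ℕ} (n : Fin (p + 1) → ℕ) :
    mzv (p + 1) n = ∑' j : ℕ, (j : ℝ)⁻¹ ^ n (Fin.last p) * truncMzv p (Fin.init n) j := by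
  rw [← chainSum_top_toReal, chainSum_succ, ENNReal.tsum_toReal_eq]
  · refine tsum_congr fun j => ?_
    rw [Set.indicator_of_mem (by exact ENat.natCast_lt_top j), chainSum_natCast, ENNReal.toReal_mul,
      ENNReal.toReal_ofReal (by positivity), ENNReal.toReal_ofReal (truncMzv_nonneg _ j)]
  · intro j
    simp [chainSum_natCast, ENNReal.mul_eq_top]

end NestedSums

section SlowGrowth

/-- The sequence `N ↦ 1 / N`, with value `0` at `0`. -/
noncomputable def natInv : ℕ → ℝ := fun N => (N : ℝ)⁻¹

/-- The sequence `N ↦ ∑_{j < N} f j` of partial sums, as a linear operator on sequences. -/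
def partialSums : (ℕ → ℝ) →ₗ[ℝ] ℕ → ℝ where
  toFun f N := ∑ j ∈ range N, f j
  map_add' f g := by ext; exact sum_add_distrib
  map_smul' x f := by ext; exact (mul_sum _ _ _).symm

lemma partialSums_succ (f : ℕ → ℝ) (N : ℕ) : partialSums f (N + 1) = partialSums f N + f N :=
  sum_range_succ f N

lemma truncMzv_succ {p : ℕ} (n : Fin (p + 1) → ℕ) :
    truncMzv (p + 1) n = partialSums (natInv ^ n (Fin.last p) * truncMzv p (Fin.init n)) :=
  rfl

/-- Sequences growing more slowly than every positive power. The bound is required at every `N`, so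
such a sequence vanishes at `0`. -/
def slowGrowth : Submodule ℝ (ℕ → ℝ) where
  carrier := {f | ∀ ε > 0, f =O[⊤] fun N : ℕ => (N : ℝ) ^ (ε : ℝ)}
  zero_mem' _ _ := isBigO_zero _ _
  add_mem' hf hg ε hε := (hf ε hε).add (hg ε hε)
  smul_mem' x _ hf ε hε := (hf ε hε).const_smul_left x

variable {c : ℕ → ℝ}

lemma apply_zero_of_mem_slowGrowth (hc : c ∈ slowGrowth) : c 0 = 0 := by
  obtain ⟨C, hC⟩ := isBigO_top.1 (hc 1 one_pos)
  simpa using hC 0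

lemma natInv_pow_mul_apply_zero (c : ℕ → ℝ) {a : ℕ} (ha : 1 ≤ a) : (natInv ^ a * c) 0 = 0 := by
  simp [natInv, Nat.one_le_iff_ne_zero.1 ha]

lemma natInv_pow_mul_isBigO (hc : c ∈ slowGrowth) (a : ℕ) {ε : ℝ} (hε : 0 < ε) :
    (natInv ^ a * c) =O[⊤] fun N : ℕ => (N : ℝ) ^ (ε - a) := by
  obtain ⟨C, hC⟩ := isBigO_top.1 (hc ε hε)
  refine isBigO_top.2 ⟨C, fun N => ?_⟩
  rcases N.eq_zero_or_pos with rfl | hN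
  · have hC' := (norm_nonneg _).trans (hC 1)
    rw [Pi.mul_apply, apply_zero_of_mem_slowGrowth hc, mul_zero, norm_zero]
    exact mul_nonneg (by simpa using hC') (norm_nonneg _)
  · have hN' : (0 : ℝ) < N := Nat.cast_pos.2 hN
    have h := mul_le_mul_of_nonneg_left (hC N) (norm_nonneg ((N : ℝ)⁻¹ ^ a))
    calc ‖(natInv ^ a * c) N‖ ≤ ‖(N : ℝ)⁻¹ ^ a‖ * (C * ‖(N : ℝ) ^ ε‖) :=
          (norm_mul _ _).trans_le h
      _ = C * ‖(N : ℝ) ^ (ε - a)‖ := by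
          rw [Real.rpow_sub hN', Real.rpow_natCast, div_eq_inv_mul, ← inv_pow, norm_mul]
          ring

lemma natInv_pow_mul_mem_slowGrowth (hc : c ∈ slowGrowth) (a : ℕ) :
    natInv ^ a * c ∈ slowGrowth := by
  refine fun ε hε => (isBigO_top.2 ⟨1, fun N => ?_⟩).trans (hc ε hε)
  rw [Pi.mul_apply, norm_mul, Pi.pow_apply, norm_pow]
  refine mul_le_mul_of_nonneg_right (pow_le_one₀ (norm_nonneg _) ?_) (norm_nonneg _)
  simpa [natInv] using Nat.cast_inv_le_one N

lemma partialSums_mem_slowGrowth (hc : c ∈ slowGrowth) {a : ℕ} (ha : 1 ≤ a) :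
    partialSums (natInv ^ a * c) ∈ slowGrowth := by
  intro ε hε
  obtain ⟨C, hC⟩ := isBigO_top.1 (natInv_pow_mul_isBigO hc a (half_pos hε))
  have hC0 : 0 ≤ C := by simpa using (norm_nonneg _).trans (hC 1)
  have hs : Summable fun j : ℕ => (j : ℝ) ^ (-1 - ε / 2) :=
    Real.summable_nat_rpow.2 (by linarith)
  have hterm {j N : ℕ} (hj : j < N) : ‖(natInv ^ a * c) j‖ ≤
      C * (N : ℝ) ^ ε * (j : ℝ) ^ (-1 - ε / 2) := by
    rcases j.eq_zero_or_pos with rfl | hj0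
    · rw [Pi.mul_apply, apply_zero_of_mem_slowGrowth hc, mul_zero, norm_zero]
      positivity
    have hj1 : (1 : ℝ) ≤ j := Nat.one_le_cast.2 hj0
    have ha' : (1 : ℝ) ≤ a := Nat.one_le_cast.2 ha
    calc ‖(natInv ^ a * c) j‖ ≤ C * (j : ℝ) ^ (ε / 2 - a) := by
          simpa [Real.norm_of_nonneg (Real.rpow_nonneg j.cast_nonneg _)] using hC j
      _ ≤ C * (j : ℝ) ^ (ε + (-1 - ε / 2)) := by gcongr; linarith
      _ = C * ((j : ℝ) ^ ε * (j : ℝ) ^ (-1 - ε / 2)) := by rw [Real.rpow_add (by positivity)]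
      _ ≤ C * ((N : ℝ) ^ ε * (j : ℝ) ^ (-1 - ε / 2)) := by gcongr
      _ = C * (N : ℝ) ^ ε * (j : ℝ) ^ (-1 - ε / 2) := (mul_assoc _ _ _).symm
  refine isBigO_top.2 ⟨C * ∑' j : ℕ, (j : ℝ) ^ (-1 - ε / 2), fun N => ?_⟩
  calc ‖partialSums (natInv ^ a * c) N‖
      ≤ ∑ j ∈ range N, C * (N : ℝ) ^ ε * (j : ℝ) ^ (-1 - ε / 2) :=
        norm_sum_le_of_le _ fun j hj => hterm (mem_range.1 hj)
    _ ≤ ∑' j : ℕ, C * (N : ℝ) ^ ε * (j : ℝ) ^ (-1 - ε / 2) :=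
        (hs.mul_left _).sum_le_tsum _ fun j _ => by positivity
    _ = C * (∑' j : ℕ, (j : ℝ) ^ (-1 - ε / 2)) * ‖(N : ℝ) ^ ε‖ := by
        rw [tsum_mul_left, Real.norm_of_nonneg (by positivity)]
        ring

lemma truncMzv_mem_slowGrowth {p : ℕ} (n : Fin p → ℕ) (hn : ∀ i, 1 ≤ n i) :
    truncMzv p n ∈ slowGrowth := by
  induction p with
  | zero =>
    refine fun ε hε => isBigO_top.2 ⟨1, fun N => ?_⟩
    rcases N.eq_zero_or_pos with rfl | hN
    · simp [truncMzv, hε.ne']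
    · have := Real.one_le_rpow (Nat.one_le_cast.2 hN : (1 : ℝ) ≤ N) hε.le
      simpa [truncMzv, hN] using this.trans (le_abs_self _)
  | succ p ih =>
    exact partialSums_mem_slowGrowth (ih (Fin.init n) fun i => hn _) (hn (Fin.last p))

lemma summable_natInv_pow_mul (hc : c ∈ slowGrowth) {a : ℕ} (ha : 2 ≤ a) :
    Summable (natInv ^ a * c) := by
  have ha' : (2 : ℝ) ≤ a := by exact_mod_cast ha
  exact summable_of_isBigO_nat (Real.summable_nat_rpow.2 (by linarith : 1 / 2 - (a : ℝ) < -1))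
    ((natInv_pow_mul_isBigO hc a one_half_pos).mono le_top)

lemma hasSum_mzv {p : ℕ} (n : Fin (p + 1) → ℕ) (hn : ∀ i, 1 ≤ n i) (hl : 2 ≤ n (Fin.last p)) :
    HasSum (natInv ^ n (Fin.last p) * truncMzv p (Fin.init n)) (mzv (p + 1) n) := by
  rw [mzv_succ_eq_tsum]
  exact (summable_natInv_pow_mul (truncMzv_mem_slowGrowth _ fun i => hn _) hl).hasSum

lemma tendsto_natInv_mul_zero (hc : c ∈ slowGrowth) : Tendsto (natInv * c) atTop (𝓝 0) := by
  have h : (natInv * c) =O[atTop] fun N : ℕ => (N : ℝ) ^ (-(1 / 2) : ℝ) := by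
    convert (natInv_pow_mul_isBigO hc 1 one_half_pos).mono le_top using 2 with N
    · rw [pow_one]
    · norm_num
  exact h.trans_tendsto
    ((tendsto_rpow_neg_atTop one_half_pos).comp tendsto_natCast_atTop_atTop)

lemma summable_natInv_pow_mul_mul_sqrt (hc : c ∈ slowGrowth) {a : ℕ} (ha : 2 ≤ a) :
    Summable fun d : ℕ => |(natInv ^ a * c) d| * √d := by
  have ha' : (2 : ℝ) ≤ a := by exact_mod_cast ha
  refine summable_of_isBigO_nat
    (Real.summable_nat_rpow.2 (by linarith : 1 / 4 - (a : ℝ) + 1 / 2 < -1)) ?_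
  have h := ((natInv_pow_mul_isBigO hc a (ε := 1 / 4) (by norm_num)).mono le_top).abs_left.mul
    (isBigO_refl (fun d : ℕ => √(d : ℝ)) atTop)
  refine h.congr' .rfl ?_
  filter_upwards [eventually_gt_atTop 0] with d hd
  rw [Real.rpow_add (by exact_mod_cast hd), Real.sqrt_eq_rpow]

end SlowGrowth

section TruncSpan

/-- The `ℚ`-span of the sequences `N ↦ x N^{-b} ∑_{0 < k_1 < ⋯ < k_p < N} k_1^{-n_1} ⋯ k_p^{-n_p}`
with `x ∈ V_{w₁,m₁}`, of total weight `≤ w` and total depth `m₁ + p < m`. The depth bound is strict: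
summing over `N` as well, which adds `1` to the depth, lands in depth `m`. -/
noncomputable def truncSpan (w m : ℕ) : Submodule ℚ (ℕ → ℝ) :=
  Submodule.span ℚ {f | ∃ w₁ m₁ b p, ∃ x ∈ Vspan w₁ m₁, ∃ n : Fin p → ℕ, (∀ i, 1 ≤ n i) ∧
    w₁ + b + ∑ i, n i ≤ w ∧ m₁ + p < m ∧ f = x • (natInv ^ b * truncMzv p n)}

/-- The families whose sum along the summation filter `L` exists and lies in `M`. -/
def summingInto {ι : Type*} (L : SummationFilter ι) (M : Submodule ℚ ℝ) : Submodule ℚ (ι → ℝ) where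
  carrier := {f | ∃ x ∈ M, HasSum f x L}
  zero_mem' := ⟨0, zero_mem _, hasSum_zero⟩
  add_mem' := fun ⟨x, hx, hf⟩ ⟨y, hy, hg⟩ => ⟨x + y, add_mem hx hy, hf.add hg⟩
  smul_mem' := fun q _ ⟨x, hx, hf⟩ => ⟨q • x, M.smul_mem q hx, hf.const_smul q⟩

variable {w w' m m' : ℕ} {f : ℕ → ℝ}

lemma truncSpan_mono (hw : w ≤ w') (hm : m ≤ m') : truncSpan w m ≤ truncSpan w' m' := by
  refine Submodule.span_mono ?_
  rintro _ ⟨w₁, m₁, b, p, x, hx, n, hn, hw₁, hm₁, rfl⟩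
  exact ⟨w₁, m₁, b, p, x, hx, n, hn, hw₁.trans hw, hm₁.trans_le hm, rfl⟩

lemma smul_truncMzv_mem_truncSpan {x : ℝ} (hx : x ∈ Vspan w m) {p : ℕ} {n : Fin p → ℕ}
    (hn : ∀ i, 1 ≤ n i) : x • truncMzv p n ∈ truncSpan (w + ∑ i, n i) (m + p + 1) :=
  Submodule.subset_span ⟨w, m, 0, p, x, hx, n, hn, le_rfl, by lia, by rw [pow_zero, one_mul]⟩

lemma truncMzv_mem_truncSpan {p : ℕ} {n : Fin p → ℕ} (hn : ∀ i, 1 ≤ n i) :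
    truncMzv p n ∈ truncSpan (∑ i, n i) (p + 1) := by
  simpa using smul_truncMzv_mem_truncSpan (one_mem_Vspan 0 0) hn

lemma truncSpan_le_slowGrowth : truncSpan w m ≤ slowGrowth.restrictScalars ℚ := by
  refine Submodule.span_le.2 ?_
  rintro _ ⟨w₁, m₁, b, p, x, -, n, hn, -, -, rfl⟩
  exact slowGrowth.smul_mem x
    (natInv_pow_mul_mem_slowGrowth (truncMzv_mem_slowGrowth n hn) b)

lemma natInv_pow_mul_mem_truncSpan (a : ℕ) (hf : f ∈ truncSpan w m) :
    natInv ^ a * f ∈ truncSpan (w + a) m := by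
  suffices h : truncSpan w m ≤ (truncSpan (w + a) m).comap (LinearMap.mulLeft ℚ (natInv ^ a)) from
    h hf
  refine Submodule.span_le.2 ?_
  rintro _ ⟨w₁, m₁, b, p, x, hx, n, hn, hw, hm, rfl⟩
  refine Submodule.subset_span ⟨w₁, m₁, a + b, p, x, hx, n, hn, by lia, hm, ?_⟩
  rw [LinearMap.mulLeft_apply, mul_smul_comm, pow_add, mul_assoc]

lemma one_le_snoc {p a : ℕ} {n : Fin p → ℕ} (hn : ∀ i, 1 ≤ n i) (ha : 1 ≤ a) (i : Fin (p + 1)) :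
    1 ≤ (Fin.snoc n a : Fin (p + 1) → ℕ) i := by
  induction i using Fin.lastCases with
  | last => rwa [Fin.snoc_last]
  | cast i => rw [Fin.snoc_castSucc]; exact hn i

lemma truncMzv_snoc {p a : ℕ} (n : Fin p → ℕ) :
    truncMzv (p + 1) (Fin.snoc n a) = partialSums (natInv ^ a * truncMzv p n) := by
  rw [truncMzv_succ, Fin.snoc_last, Fin.init_snoc]

lemma partialSums_mem_truncSpan {a : ℕ} (ha : 1 ≤ a) (hf : f ∈ truncSpan w m) :
    partialSums (natInv ^ a * f) ∈ truncSpan (w + a) (m + 1) := by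
  suffices h : truncSpan w m ≤ (truncSpan (w + a) (m + 1)).comap
      (partialSums.restrictScalars ℚ ∘ₗ LinearMap.mulLeft ℚ (natInv ^ a)) from h hf
  refine Submodule.span_le.2 ?_
  rintro _ ⟨w₁, m₁, b, p, x, hx, n, hn, hw, hm, rfl⟩
  have hmem := smul_truncMzv_mem_truncSpan hx (one_le_snoc hn (by lia : 1 ≤ a + b))
  rw [Fin.sum_snoc, truncMzv_snoc, ← map_smul, pow_add, mul_assoc, ← mul_smul_comm] at hmem
  exact truncSpan_mono (by lia) (by lia) hmem

lemma natInv_pow_mul_mem_summingInto {a : ℕ} (ha : 2 ≤ a) (hf : f ∈ truncSpan w m) :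
    natInv ^ a * f ∈ summingInto (.unconditional ℕ) (Vspan (w + a) m) := by
  suffices h : truncSpan w m ≤ (summingInto (.unconditional ℕ) (Vspan (w + a) m)).comap
      (LinearMap.mulLeft ℚ (natInv ^ a)) from h hf
  refine Submodule.span_le.2 ?_
  rintro _ ⟨w₁, m₁, b, p, x, hx, n, hn, hw, hm, rfl⟩
  have hn' := one_le_snoc hn (by lia : 1 ≤ a + b)
  have hl : 2 ≤ (Fin.snoc n (a + b) : Fin (p + 1) → ℕ) (Fin.last p) := by
    rw [Fin.snoc_last]
    lia
  have hz := mzv_mem_Vspan p _ hn' hl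
  have hsum := (hasSum_mzv _ hn' hl).mul_left x
  rw [Fin.sum_snoc] at hz
  rw [Fin.snoc_last, Fin.init_snoc, pow_add, mul_assoc] at hsum
  refine ⟨_, Vspan_mono (by lia) (by lia) (Vspan_mul_mem hx hz), ?_⟩
  rw [LinearMap.mulLeft_apply, mul_smul_comm]
  exact hsum

end TruncSpan

section PoleSums

/-- The function `k ↦ 1 / k` on the integers, with value `0` at `0`. -/
noncomputable def intInv : ℤ → ℝ := fun k => (k : ℝ)⁻¹

/-- The sum `∑_{d ≥ 0} a_d / (k - d)^u`, in which the term `d = k` is omitted when `1 ≤ u`. -/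
noncomputable def poleSum (u : ℕ) (a : ℕ → ℝ) (k : ℤ) : ℝ :=
  ∑' d : ℕ, a d * intInv (k - d) ^ u

/-- The variant `∑_{d ≥ 0} a_d (1 / (k - d)^u - 1 / (-d)^u)` of `poleSum`, which vanishes at `k = 0`
and converges for all sequences `a` of slow growth, as in a Mittag-Leffler expansion. -/
noncomputable def regPoleSum (u : ℕ) (a : ℕ → ℝ) (k : ℤ) : ℝ :=
  ∑' d : ℕ, a d * (intInv (k - d) ^ u - intInv (-d) ^ u)

lemma intInv_neg (k : ℤ) : intInv (-k) = -intInv k := by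
  simp only [intInv, Int.cast_neg, inv_neg]

lemma intInv_natCast (d : ℕ) : intInv d = natInv d := by
  simp only [intInv, natInv, Int.cast_natCast]

lemma intInv_zero_pow {u : ℕ} (hu : 1 ≤ u) : intInv 0 ^ u = 0 := by
  simp [intInv, Nat.one_le_iff_ne_zero.1 hu]

lemma intInv_neg_natCast_pow (d u : ℕ) : intInv (-d) ^ u = (-1) ^ u * (natInv ^ u) d := by
  rw [intInv_neg, intInv_natCast, neg_pow, Pi.pow_apply]

lemma regPoleSum_zero_right (u : ℕ) (a : ℕ → ℝ) : regPoleSum u a 0 = 0 := by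
  simp [regPoleSum]

lemma intInv_sub_natCast_pow_isBigO (k : ℤ) {u : ℕ} (hu : 1 ≤ u) :
    (fun d : ℕ => intInv (k - d) ^ u) =O[atTop] natInv := by
  have hatBot : Tendsto (fun d : ℕ => (k : ℝ) - d) atTop atBot := by
    simpa only [sub_eq_add_neg, Function.comp_def] using tendsto_atBot_add_const_left _ (k : ℝ)
      (tendsto_neg_atTop_atBot.comp tendsto_natCast_atTop_atTop)
  have hd : (fun d : ℕ => (d : ℝ)) =O[atTop] fun d : ℕ => (k : ℝ) - d := by
    have hk : (fun _ => (k : ℝ)) =O[atTop] fun d : ℕ => (k : ℝ) - d :=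
      (isLittleO_const_left.2 (Or.inr (tendsto_abs_atBot_atTop.comp hatBot))).isBigO
    simpa using hk.sub (isBigO_refl (fun d : ℕ => (k : ℝ) - d) atTop)
  have hinv : (fun d : ℕ => intInv (k - d)) =O[atTop] natInv := by
    refine (hd.inv_rev ?_).congr_left fun d => by simp [intInv]
    filter_upwards [eventually_gt_atTop 0] with d hd h
    exact absurd h (by positivity)
  refine IsBigO.trans (IsBigO.of_bound 1 (Eventually.of_forall fun d => ?_)) hinv
  rw [norm_pow, one_mul]
  refine pow_le_of_le_one (norm_nonneg _) ?_ (Nat.one_le_iff_ne_zero.1 hu)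
  rcases eq_or_ne (k - d) 0 with h | h
  · simp [intInv, h]
  · rw [intInv, norm_inv, Real.norm_eq_abs]
    exact inv_le_one_of_one_le₀ (by exact_mod_cast Int.one_le_abs h)

lemma summable_poleSum {a : ℕ → ℝ} (ha : Summable (natInv * a)) {u : ℕ} (hu : 1 ≤ u) (k : ℤ) :
    Summable fun d : ℕ => a d * intInv (k - d) ^ u :=
  summable_of_isBigO_nat ha.norm <|
    (((isBigO_refl a _).mul (intInv_sub_natCast_pow_isBigO k hu)).congr_right
      fun _ => mul_comm _ _).norm_right

/-- A geometric sum, since `1 / (x (x - d)) = (1 / (x - d) - 1 / x) / d`; the last two terms correct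
the convention `0⁻¹ = 0` at the poles. -/
lemma inv_mul_sub_inv_pow {K : Type*} [Field K] [DecidableEq K] {d : K} (hd : d ≠ 0) (x : K) {j : ℕ}
    (hj : 1 ≤ j) :
    x⁻¹ * ((x - d)⁻¹ ^ j - (-d)⁻¹ ^ j) =
      -∑ i ∈ range j, (-d)⁻¹ ^ (j - i) * (x - d)⁻¹ ^ (i + 1) +
        (if x = d then (-d)⁻¹ ^ (j + 1) else 0) +
        (if x = 0 then j * (-d)⁻¹ ^ (j + 1) else 0) := by
  have hj0 : j ≠ 0 := Nat.one_le_iff_ne_zero.1 hj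
  have hsub {i : ℕ} (hi : i ∈ range j) : j - i = (j - 1 - i) + 1 := by grind
  rcases eq_or_ne x 0 with rfl | hx
  · have hterm : ∀ i ∈ range j, (-d)⁻¹ ^ (j - i) * (0 - d)⁻¹ ^ (i + 1) = (-d)⁻¹ ^ (j + 1) := by
      intro i hi
      rw [zero_sub, ← pow_add]
      congr 1
      grind
    rw [sum_congr rfl hterm]
    simp [hd.symm]
  rcases eq_or_ne x d with rfl | hxd
  · simp [hx, hj0, pow_succ']
  have hxd' : x - d ≠ 0 := sub_ne_zero.2 hxd
  have hgeom := geom_sum₂_mul (x - d)⁻¹ (-d)⁻¹ j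
  have hdiff : x⁻¹ * ((x - d)⁻¹ - (-d)⁻¹) = -((-d)⁻¹ * (x - d)⁻¹) := by
    field_simp
    ring
  rw [if_neg hxd, if_neg hx, add_zero, add_zero, ← hgeom, mul_left_comm, hdiff, sum_mul,
    ← sum_neg_distrib]
  refine sum_congr rfl fun i hi => ?_
  rw [hsub hi]
  ring

variable {c : ℕ → ℝ}

lemma intInv_mul_regPoleSum_term (hc : c 0 = 0) {j : ℕ} (hj : 1 ≤ j) (k : ℤ) (d : ℕ) :
    intInv k * (c d * (intInv (k - d) ^ j - intInv (-d) ^ j)) =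
      -∑ i ∈ range j, (-1) ^ (j - i) * ((natInv ^ (j - i) * c) d * intInv (k - d) ^ (i + 1)) +
        (if k = d then (-1) ^ (j + 1) * (natInv ^ (j + 1) * c) d else 0) +
        if k = 0 then j * ((-1) ^ (j + 1) * (natInv ^ (j + 1) * c) d) else 0 := by
  rcases d.eq_zero_or_pos with rfl | hd
  · simp [hc]
  have hpow (e : ℕ) : (-(d : ℝ))⁻¹ ^ e = (-1) ^ e * (natInv ^ e) d := by
    rw [inv_neg, neg_pow]
    rfl
  have h := inv_mul_sub_inv_pow (Nat.cast_ne_zero.2 hd.ne' : (d : ℝ) ≠ 0) (k : ℝ) hj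
  have hkd : (k : ℝ) = d ↔ k = d := by exact_mod_cast Iff.rfl
  simp only [hpow, hkd, Int.cast_eq_zero] at h
  rw [intInv_neg_natCast_pow, mul_left_comm]
  simp only [intInv, Int.cast_sub, Int.cast_natCast]
  rw [h, mul_add, mul_add, mul_neg, mul_sum, mul_ite, mul_ite, mul_zero]
  simp only [Pi.mul_apply]
  congr 2
  · congr 2 with i
    ring
  · split_ifs <;> ring
  · ring

lemma hasSum_intInv_mul_regPoleSum (hc : c ∈ slowGrowth) {j : ℕ} (hj : 1 ≤ j) (k : ℤ) :
    HasSum (fun d : ℕ => intInv k * (c d * (intInv (k - d) ^ j - intInv (-d) ^ j)))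
      (-∑ i ∈ range j, (-1) ^ (j - i) * poleSum (i + 1) (natInv ^ (j - i) * c) k +
        (-1) ^ (j + 1) * (natInv ^ (j + 1) * c) k.toNat +
        if k = 0 then j * ((-1) ^ (j + 1) * ∑' d, (natInv ^ (j + 1) * c) d) else 0) := by
  have hc0 := apply_zero_of_mem_slowGrowth hc
  simp only [intInv_mul_regPoleSum_term hc0 hj]
  refine .add (.add (.neg (hasSum_sum fun i hi => .mul_left _ ?_)) ?_) ?_
  · have hs := summable_natInv_pow_mul hc (by grind : 2 ≤ j - i + 1)
    rw [pow_succ', mul_assoc] at hs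
    exact (summable_poleSum hs (by lia) k).hasSum
  · convert hasSum_single k.toNat ?_ using 1
    · rcases lt_or_ge k 0 with hk | hk
      · simp [Int.toNat_of_nonpos hk.le, hc0]
      · rw [if_pos (Int.toNat_of_nonneg hk).symm]
    · intro d hd
      exact if_neg (by grind)
  · split_ifs
    · exact ((summable_natInv_pow_mul hc (by lia)).hasSum.mul_left _).mul_left _
    · exact hasSum_zero

lemma summable_regPoleSum (hc : c ∈ slowGrowth) {j : ℕ} (hj : 1 ≤ j) (k : ℤ) :
    Summable fun d : ℕ => c d * (intInv (k - d) ^ j - intInv (-d) ^ j) := by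
  rcases eq_or_ne k 0 with rfl | hk
  · simp [summable_zero]
  · exact (summable_mul_left_iff (by simpa [intInv] using hk)).1
      (hasSum_intInv_mul_regPoleSum hc hj k).summable

lemma intInv_mul_regPoleSum (hc : c ∈ slowGrowth) {j : ℕ} (hj : 1 ≤ j) :
    intInv * regPoleSum j c =
      -∑ i ∈ range j, (-1 : ℝ) ^ (j - i) • poleSum (i + 1) (natInv ^ (j - i) * c) +
        (-1 : ℝ) ^ (j + 1) • ((natInv ^ (j + 1) * c) ∘ Int.toNat) +
        Pi.single 0 (j * ((-1) ^ (j + 1) * ∑' d, (natInv ^ (j + 1) * c) d)) := by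
  ext k
  have := (hasSum_intInv_mul_regPoleSum hc hj k).tsum_eq
  rw [tsum_mul_left] at this
  simpa [Pi.single_apply, regPoleSum] using this

lemma poleSum_eq_regPoleSum_add (hc : c ∈ slowGrowth) {s u : ℕ} (hs : 1 ≤ s) (hu : 1 ≤ u) :
    poleSum u (natInv ^ s * c) = regPoleSum u (natInv ^ s * c) +
      fun _ => (-1) ^ u * ∑' d, (natInv ^ (u + s) * c) d := by
  ext k
  have hreg := (summable_regPoleSum (natInv_pow_mul_mem_slowGrowth hc s) hu k).hasSum
  have hconst := (summable_natInv_pow_mul hc (by lia : 2 ≤ u + s)).hasSum.mul_left ((-1) ^ u)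
  refine ((hreg.add hconst).congr_fun fun d => ?_).tsum_eq
  rw [intInv_neg_natCast_pow]
  simp only [Pi.mul_apply, pow_add]
  ring

lemma fwdDiff_regPoleSum_partialSums {a : ℕ → ℝ} (ha : Summable (natInv * a))
    (hS : partialSums a ∈ slowGrowth) {u : ℕ} (hu : 1 ≤ u) :
    fwdDiff 1 (regPoleSum u (partialSums a)) = poleSum u a := by
  ext k
  have hdiff : HasSum (fun d : ℕ => partialSums a d * (intInv (k + 1 - d) ^ u - intInv (k - d) ^ u))
      (fwdDiff 1 (regPoleSum u (partialSums a)) k) :=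
    ((summable_regPoleSum hS hu (k + 1)).hasSum.sub
      (summable_regPoleSum hS hu k).hasSum).congr_fun fun d => by ring
  have hpole := (summable_poleSum ha hu k).hasSum
  set g : ℕ → ℝ := fun d => partialSums a d * intInv (k + 1 - d) ^ u
  have hg (d : ℕ) : g (d + 1) - g d = a d * intInv (k - d) ^ u -
      partialSums a d * (intInv (k + 1 - d) ^ u - intInv (k - d) ^ u) := by
    simp only [g, partialSums_succ, Nat.cast_succ, add_sub_add_right_eq_sub]
    ring
  have hg0 : Tendsto g atTop (𝓝 0) := by
    refine IsBigO.trans_tendsto ?_ (tendsto_natInv_mul_zero hS)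
    exact ((isBigO_refl _ _).mul (intInv_sub_natCast_pow_isBigO (k + 1) hu)).congr_right
      fun d => mul_comm _ _
  have htelescope := (hpole.sub hdiff).tendsto_sum_nat
  simp only [← hg, sum_range_sub] at htelescope
  have := tendsto_nhds_unique htelescope (hg0.sub_const (g 0))
  have hg00 : g 0 = 0 := by simp [g, partialSums]
  rw [poleSum]
  linarith

end PoleSums

section PolarSpan

/-- The generators of `polarSpan s w m`: a pole at `0`, a value at `0`, a term supported on the
positive integers, or a sum of poles at the positive integers; `s` bounds the order of decay of the
coefficients of the last two from below. -/
inductive IsPolarTerm (s w m : ℕ) : (ℤ → ℝ) → Prop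
  | pow {w₁ v : ℕ} {α : ℝ} (hα : α ∈ Vspan w₁ m) (hv : 1 ≤ v) (hw : w₁ + v ≤ w) :
      IsPolarTerm s w m (α • intInv ^ v)
  | atZero {α : ℝ} (hα : α ∈ Vspan w m) : IsPolarTerm s w m (Pi.single 0 α)
  | onNat {w₁ b : ℕ} {η : ℕ → ℝ} (hη : η ∈ truncSpan w₁ m) (hb : s ≤ b) (hw : w₁ + b ≤ w) :
      IsPolarTerm s w m ((natInv ^ b * η) ∘ Int.toNat)
  | poles {w₁ b u : ℕ} {η : ℕ → ℝ} (hη : η ∈ truncSpan w₁ m) (hb : s ≤ b) (hu : 1 ≤ u)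
      (hw : w₁ + b + u ≤ w) : IsPolarTerm s w m (poleSum u (natInv ^ b * η))

/-- The span of the polar terms. It contains the products of `1 / k ^ s` with the functions in
`extensionSpan`, and for `1 ≤ s` its elements have primitives for the forward difference there. -/
noncomputable def polarSpan (s w m : ℕ) : Submodule ℚ (ℤ → ℝ) :=
  Submodule.span ℚ {f | IsPolarTerm s w m f}

/-- The generators of `extensionSpan w m`: constants, truncated multiple zeta values extended by
zero to the negative integers, and Mittag-Leffler expansions with such coefficients. -/
inductive IsExtensionTerm (w m : ℕ) : (ℤ → ℝ) → Prop
  | const {α : ℝ} (hα : α ∈ Vspan w m) : IsExtensionTerm w m fun _ => α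
  | onNat {η : ℕ → ℝ} (hη : η ∈ truncSpan w m) : IsExtensionTerm w m (η ∘ Int.toNat)
  | poles {w₁ j : ℕ} {η : ℕ → ℝ} (hη : η ∈ truncSpan w₁ m) (hj : 1 ≤ j) (hw : w₁ + j ≤ w) :
      IsExtensionTerm w m (regPoleSum j η)

/-- The space of functions on `ℤ` in which the truncated multiple zeta values are interpolated. -/
noncomputable def extensionSpan (w m : ℕ) : Submodule ℚ (ℤ → ℝ) :=
  Submodule.span ℚ {f | IsExtensionTerm w m f}

variable {s t w w₁ m b j : ℕ} {f : ℤ → ℝ} {η : ℕ → ℝ}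

lemma IsPolarTerm.mem_polarSpan (h : IsPolarTerm s w m f) : f ∈ polarSpan s w m :=
  Submodule.subset_span h

lemma IsExtensionTerm.mem_extensionSpan (h : IsExtensionTerm w m f) : f ∈ extensionSpan w m :=
  Submodule.subset_span h

lemma polarSpan_anti (hst : s ≤ t) : polarSpan t w m ≤ polarSpan s w m := by
  refine Submodule.span_mono fun f hf => ?_
  cases hf with
  | pow hα hv hw => exact .pow hα hv hw
  | atZero hα => exact .atZero hα
  | onNat hη hb hw => exact .onNat hη (hst.trans hb) hw
  | poles hη hb hu hw => exact .poles hη (hst.trans hb) hu hw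

lemma neg_one_pow_smul_mem {E : Type*} [AddCommGroup E] [Module ℚ E] [Module ℝ E]
    (M : Submodule ℚ E) {x : E} (hx : x ∈ M) (e : ℕ) : (-1 : ℝ) ^ e • x ∈ M := by
  rcases neg_one_pow_eq_or ℝ e with h | h
  · rwa [h, one_smul]
  · rw [h, neg_one_smul]
    exact M.neg_mem hx

lemma tsum_natInv_pow_mul_mem {a : ℕ} (ha : 2 ≤ a) (hη : η ∈ truncSpan w m) :
    ∑' d, (natInv ^ a * η) d ∈ Vspan (w + a) m := by
  obtain ⟨x, hx, hsum⟩ := natInv_pow_mul_mem_summingInto ha hη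
  rwa [hsum.tsum_eq]

lemma intInv_mul_comp_toNat (hη : η 0 = 0) :
    intInv * (η ∘ Int.toNat) = (natInv * η) ∘ Int.toNat := by
  ext k
  rcases le_total 0 k with hk | hk
  · lift k to ℕ using hk
    simp only [Pi.mul_apply, Function.comp_apply, Int.toNat_natCast, intInv_natCast]
  · simp [Int.toNat_of_nonpos hk, hη]

lemma intInv_mul_regPoleSum_mem_polarSpan (hη : η ∈ truncSpan w₁ m) (hj : 1 ≤ j)
    (hw : w₁ + b + j ≤ w) :
    intInv * regPoleSum j (natInv ^ b * η) ∈ polarSpan (b + 1) (w + 1) m := by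
  have hη' := natInv_pow_mul_mem_truncSpan b hη
  have hmul (e : ℕ) : natInv ^ e * (natInv ^ b * η) = natInv ^ (e + b) * η := by
    rw [pow_add, mul_assoc]
  rw [intInv_mul_regPoleSum (truncSpan_le_slowGrowth hη') hj]
  refine add_mem (add_mem (neg_mem (sum_mem fun i hi => ?_)) ?_) ?_
  · have hi := mem_range.1 hi
    rw [hmul]
    exact neg_one_pow_smul_mem _
      (IsPolarTerm.poles hη (by lia) (by lia) (by lia)).mem_polarSpan _
  · rw [hmul]
    exact neg_one_pow_smul_mem _ (IsPolarTerm.onNat hη (by lia) (by lia)).mem_polarSpan _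
  · rw [← nsmul_eq_mul]
    refine (IsPolarTerm.atZero (nsmul_mem (neg_one_pow_smul_mem _ ?_ _) j)).mem_polarSpan
    exact Vspan_mono (by lia) le_rfl (tsum_natInv_pow_mul_mem (by lia) hη')

lemma intInv_mul_mem_polarSpan_one (hf : f ∈ extensionSpan w m) :
    intInv * f ∈ polarSpan 1 (w + 1) m := by
  suffices h : extensionSpan w m ≤
      (polarSpan 1 (w + 1) m).comap (LinearMap.mulLeft ℚ intInv) from h hf
  refine Submodule.span_le.2 fun f hf => ?_
  change intInv * f ∈ polarSpan 1 (w + 1) m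
  cases hf with
  | @const α hα =>
    convert (IsPolarTerm.pow (s := 1) hα le_rfl le_rfl).mem_polarSpan using 1
    ext k
    simp [mul_comm]
  | onNat hη =>
    rw [intInv_mul_comp_toNat (apply_zero_of_mem_slowGrowth (truncSpan_le_slowGrowth hη))]
    simpa using (IsPolarTerm.onNat (b := 1) hη le_rfl le_rfl).mem_polarSpan
  | poles hη hj hw =>
    simpa using intInv_mul_regPoleSum_mem_polarSpan (b := 0) hη hj hw

lemma intInv_mul_mem_polarSpan_succ (hs : 1 ≤ s) (hf : f ∈ polarSpan s w m) :
    intInv * f ∈ polarSpan (s + 1) (w + 1) m := by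
  suffices h : polarSpan s w m ≤
      (polarSpan (s + 1) (w + 1) m).comap (LinearMap.mulLeft ℚ intInv) from h hf
  refine Submodule.span_le.2 fun f hf => ?_
  change intInv * f ∈ polarSpan (s + 1) (w + 1) m
  cases hf with
  | pow hα hv hw =>
    rw [mul_smul_comm, ← pow_succ']
    exact (IsPolarTerm.pow hα (by lia) (by lia)).mem_polarSpan
  | atZero hα =>
    convert zero_mem (polarSpan (s + 1) (w + 1) m) using 1
    ext k
    rcases eq_or_ne k 0 with rfl | hk
    · simp [intInv]
    · simp [hk]
  | @onNat w₁ b η hη hb hw =>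
    rw [intInv_mul_comp_toNat (natInv_pow_mul_apply_zero _ (hs.trans hb)), ← mul_assoc, ← pow_succ']
    exact (IsPolarTerm.onNat hη (by lia) (by lia)).mem_polarSpan
  | @poles w₁ b u η hη hb hu hw =>
    rw [poleSum_eq_regPoleSum_add (truncSpan_le_slowGrowth hη) (hs.trans hb) hu, mul_add]
    refine add_mem (polarSpan_anti (by lia) (intInv_mul_regPoleSum_mem_polarSpan hη hu hw)) ?_
    have hα := neg_one_pow_smul_mem _ (tsum_natInv_pow_mul_mem (by lia : 2 ≤ u + b) hη) u
    convert (IsPolarTerm.pow (s := s + 1) (w := w + 1) hα le_rfl (by lia)).mem_polarSpan using 1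
    ext k
    simp [mul_comm]

lemma intInv_pow_mul_mem_polarSpan (hb : 1 ≤ b) (hf : f ∈ extensionSpan w m) :
    intInv ^ b * f ∈ polarSpan b (w + b) m := by
  induction b, hb using Nat.le_induction with
  | base => simpa using intInv_mul_mem_polarSpan_one hf
  | succ b hb ih =>
    rw [pow_succ', mul_assoc]
    exact intInv_mul_mem_polarSpan_succ hb ih

end PolarSpan

section Primitives

variable {w m : ℕ} {f : ℤ → ℝ}

lemma partialSums_single_zero (α : ℝ) : partialSums (Pi.single 0 α) = α • truncMzv 0 ![] := by
  ext N
  simp [partialSums, truncMzv, Pi.single_apply]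

lemma poleSum_single_zero (v : ℕ) (α : ℝ) : poleSum v (Pi.single 0 α) = α • intInv ^ v := by
  ext k
  rw [poleSum, tsum_eq_single 0 fun d hd => by simp [hd]]
  simp

lemma fwdDiff_partialSums_comp_toNat {a : ℕ → ℝ} (ha : a 0 = 0) :
    fwdDiff 1 (partialSums a ∘ Int.toNat) = a ∘ Int.toNat := by
  ext k
  rcases lt_or_ge k 0 with hk | hk
  · simp [fwdDiff, Int.toNat_of_nonpos hk.le, Int.toNat_of_nonpos (show k + 1 ≤ 0 by lia), ha]
  · lift k to ℕ using hk
    simp [fwdDiff, partialSums_succ]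

lemma fwdDiff_smul_truncMzv_zero_comp_toNat (α : ℝ) :
    fwdDiff 1 ((α • truncMzv 0 ![]) ∘ Int.toNat) = Pi.single 0 α := by
  ext k
  rcases lt_trichotomy k 0 with hk | rfl | hk
  · simp [fwdDiff, truncMzv, hk.ne, hk.not_ge, hk.le.not_gt]
  · simp [fwdDiff, truncMzv]
  · simp [fwdDiff, truncMzv, hk, hk.ne', show 0 < k + 1 by lia]

lemma exists_fwdDiff_eq_poleSum {a : ℕ → ℝ} (ha : Summable (natInv * a)) {w₁ u : ℕ}
    (hS : partialSums a ∈ truncSpan w₁ m) (hu : 1 ≤ u) (hw : w₁ + u ≤ w) :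
    ∃ Φ ∈ extensionSpan w m, fwdDiff 1 Φ = poleSum u a ∧ Φ 0 = 0 :=
  ⟨_, (IsExtensionTerm.poles hS hu hw).mem_extensionSpan,
    fwdDiff_regPoleSum_partialSums ha (truncSpan_le_slowGrowth hS) hu, regPoleSum_zero_right u _⟩

lemma exists_fwdDiff_eq_of_comp_toNat {η : ℕ → ℝ} (hη : η ∈ truncSpan w m)
    (hf : fwdDiff 1 (η ∘ Int.toNat) = f) :
    ∃ Φ ∈ extensionSpan w m, fwdDiff 1 Φ = f ∧ Φ 0 = 0 :=
  ⟨_, (IsExtensionTerm.onNat hη).mem_extensionSpan, hf,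
    apply_zero_of_mem_slowGrowth (truncSpan_le_slowGrowth hη)⟩

lemma IsPolarTerm.exists_fwdDiff_eq (hf : IsPolarTerm 1 w m f) :
    ∃ Φ ∈ extensionSpan w (m + 1), fwdDiff 1 Φ = f ∧ Φ 0 = 0 := by
  have htrunc {w₁ : ℕ} {α : ℝ} (hα : α ∈ Vspan w₁ m) :
      α • truncMzv 0 ![] ∈ truncSpan w₁ (m + 1) := by
    simpa using smul_truncMzv_mem_truncSpan (n := ![]) hα finZeroElim
  cases hf with
  | @pow w₁ v α hα hv hw =>
    have hsum : natInv * Pi.single 0 α = 0 := by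
      ext d
      rcases eq_or_ne d 0 with rfl | hd
      · simp [natInv]
      · simp [hd]
    rw [← poleSum_single_zero]
    refine exists_fwdDiff_eq_poleSum (hsum ▸ summable_zero) ?_ hv hw
    rw [partialSums_single_zero]
    exact htrunc hα
  | @atZero α hα =>
    exact exists_fwdDiff_eq_of_comp_toNat (htrunc hα)
      (fwdDiff_smul_truncMzv_zero_comp_toNat α)
  | @onNat w₁ b η hη hb hw =>
    refine exists_fwdDiff_eq_of_comp_toNat
      (truncSpan_mono hw le_rfl (partialSums_mem_truncSpan hb hη)) ?_
    exact fwdDiff_partialSums_comp_toNat (natInv_pow_mul_apply_zero _ hb)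
  | @poles w₁ b u η hη hb hu hw =>
    refine exists_fwdDiff_eq_poleSum ?_ (partialSums_mem_truncSpan hb hη) hu hw
    rw [← mul_assoc, ← pow_succ']
    exact summable_natInv_pow_mul (truncSpan_le_slowGrowth hη) (by lia)

lemma exists_fwdDiff_eq_of_mem_polarSpan (hf : f ∈ polarSpan 1 w m) :
    ∃ Φ ∈ extensionSpan w (m + 1), fwdDiff 1 Φ = f ∧ Φ 0 = 0 := by
  induction hf using Submodule.span_induction with
  | mem f hf => exact hf.exists_fwdDiff_eq
  | zero => exact ⟨0, zero_mem _, fwdDiff_const 1 0, rfl⟩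
  | add f g _ _ hf hg =>
    obtain ⟨Φ, hΦ, rfl, hΦ0⟩ := hf
    obtain ⟨Ψ, hΨ, rfl, hΨ0⟩ := hg
    exact ⟨Φ + Ψ, add_mem hΦ hΨ, fwdDiff_add 1 Φ Ψ, by simp [hΦ0, hΨ0]⟩
  | smul q f _ hf =>
    obtain ⟨Φ, hΦ, rfl, hΦ0⟩ := hf
    exact ⟨q • Φ, Submodule.smul_mem _ q hΦ, fwdDiff_const_smul 1 q Φ, by simp [hΦ0]⟩

end Primitives

section SymmetricSums

lemma summable_intInv_pow {v : ℕ} (hv : 2 ≤ v) : Summable (intInv ^ v) := by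
  refine (Real.summable_one_div_int_pow.2 hv).congr fun k => ?_
  rw [Pi.pow_apply, intInv, one_div, inv_pow]

lemma intInv_pow_mem_summingInto {v : ℕ} (hv : 1 ≤ v) :
    intInv ^ v ∈ summingInto (.symmetricIcc ℤ) (Vspan v 0) := by
  rcases v.even_or_odd with he | ho
  · obtain ⟨a, rfl⟩ := he.two_dvd
    have hz := hasSum_zeta_nat (k := a) (by lia)
    have hterm (k : ℕ) : 1 / (k : ℝ) ^ (2 * a) = (intInv ^ (2 * a)) k := by
      rw [Pi.pow_apply, intInv, one_div, inv_pow, Int.cast_natCast]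
    have hneg (k : ℕ) : (intInv ^ (2 * a)) k = (intInv ^ (2 * a)) (-k) := by
      rw [Pi.pow_apply, Pi.pow_apply, intInv_neg, he.neg_pow]
    simp only [hterm] at hz
    have hsum := hz.of_nat_of_neg (by simpa only [hneg] using hz)
    refine ⟨_, ?_, hsum.mono_left (SummationFilter.symmetricIcc ℤ).le_atTop⟩
    convert Submodule.smul_mem _ ((-1 : ℚ) ^ (a + 1) * 2 ^ (2 * a - 1) * bernoulli (2 * a) /
      (2 * a).factorial * 2) (pi_pow_mem_Vspan a) using 1
    rw [Rat.smul_def, Pi.pow_apply, intInv_zero_pow hv]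
    push_cast
    ring
  · have hodd : Function.Odd (intInv ^ v) := fun k => by
      rw [Pi.pow_apply, intInv_neg, ho.neg_pow, Pi.pow_apply]
    refine ⟨0, zero_mem _, SummationFilter.hasSum_symmetricIcc_iff.2 ?_⟩
    have hzero (N : ℕ) : ∑ k ∈ Icc (-N : ℤ) N, (intInv ^ v) k = 0 :=
      hodd.finsetSum_eq_zero (by ext k; simp; lia)
    simp only [hzero, tendsto_const_nhds]

lemma sum_Icc_neg_comp_sub_one (g : ℤ → ℝ) (N : ℕ) :
    ∑ k ∈ Icc (-N : ℤ) N, g (k - 1) = ∑ k ∈ Icc (-N : ℤ) N, g k + (g (-N - 1) - g N) := by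
  have hshift : ∑ k ∈ Icc (-N : ℤ) N, g (k - 1) = ∑ k ∈ Icc (-N - 1 : ℤ) (N - 1), g k :=
    sum_nbij' (· - 1) (· + 1) (by grind) (by grind) (by grind) (by grind) (by grind)
  have hright : Icc (-N - 1 : ℤ) N = insert (N : ℤ) (Icc (-N - 1 : ℤ) (N - 1)) := by grind
  have hleft : Icc (-N - 1 : ℤ) N = insert (-N - 1 : ℤ) (Icc (-N : ℤ) N) := by grind
  have h := congrArg (fun s => ∑ k ∈ s, g k) (hright.symm.trans hleft)
  rw [sum_insert (by grind), sum_insert (by grind)] at h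
  rw [hshift]
  linarith

lemma sum_Icc_neg_comp_sub (g : ℤ → ℝ) (N d : ℕ) :
    ∑ k ∈ Icc (-N : ℤ) N, g (k - d) =
      ∑ k ∈ Icc (-N : ℤ) N, g k + (∑ i ∈ range d, g (-N - 1 - i) - ∑ i ∈ range d, g (N - i)) := by
  induction d with
  | zero => simp
  | succ d ih =>
    have h := sum_Icc_neg_comp_sub_one (fun k => g (k - d)) N
    simp only [sub_sub, Nat.cast_succ, sum_range_succ, add_comm (d : ℤ)] at h ih ⊢
    linarith

lemma abs_sum_comp_le_sqrt_mul_sqrt {ι κ : Type*} {g : ι → ℝ} (hg : Summable (g ^ 2)) {φ : κ → ι}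
    (hφ : Function.Injective φ) (s : Finset κ) :
    |∑ i ∈ s, g (φ i)| ≤ √(#s : ℝ) * √(∑' k, (g ^ 2) k) := by
  rw [← Real.sqrt_mul (Nat.cast_nonneg _)]
  refine Real.abs_le_sqrt (sq_sum_le_card_mul_sum_sq.trans ?_)
  gcongr
  calc ∑ i ∈ s, g (φ i) ^ 2 = ∑ k ∈ s.map ⟨φ, hφ⟩, (g ^ 2) k := by simp
    _ ≤ ∑' k, (g ^ 2) k := hg.sum_le_tsum _ fun k _ => sq_nonneg (g k)

lemma tendsto_cofinite_zero_of_summable_sq {ι : Type*} {g : ι → ℝ} (hg : Summable (g ^ 2)) :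
    Tendsto g cofinite (𝓝 0) := by
  refine (tendsto_zero_iff_abs_tendsto_zero g).2 ?_
  simpa [Real.sqrt_sq_eq_abs, Function.comp_def] using hg.tendsto_cofinite_zero.sqrt

variable {g : ℤ → ℝ} {ρ : ℝ}

lemma hasSum_symmetricIcc_comp_sub (hg : HasSum g ρ (.symmetricIcc ℤ))
    (hg0 : Tendsto g cofinite (𝓝 0)) (d : ℕ) :
    HasSum (fun k : ℤ => g (k - d)) ρ (.symmetricIcc ℤ) := by
  rw [SummationFilter.hasSum_symmetricIcc_iff] at hg ⊢
  simp only [sum_Icc_neg_comp_sub]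
  have hcof {φ : ℕ → ℤ} (hφ : Function.Injective φ) : Tendsto (fun N => g (φ N)) atTop (𝓝 0) := by
    rw [← Nat.cofinite_eq_atTop]
    exact hg0.comp hφ.tendsto_cofinite
  have hleft : Tendsto (fun N : ℕ => ∑ i ∈ range d, g (-N - 1 - i)) atTop (𝓝 (∑ _ ∈ range d, 0)) :=
    tendsto_finsetSum _ fun i _ => hcof fun M N h => by simpa using h
  have hright : Tendsto (fun N : ℕ => ∑ i ∈ range d, g (N - i)) atTop (𝓝 (∑ _ ∈ range d, 0)) :=
    tendsto_finsetSum _ fun i _ => hcof fun M N h => by simpa using h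
  simpa using hg.add (hleft.sub hright)

-- Shifting by `d` changes the partial sum by `2 d` boundary terms, and Cauchy-Schwarz bounds them.
lemma exists_abs_sum_Icc_neg_comp_sub_le (hsq : Summable (g ^ 2))
    (hg : HasSum g ρ (.symmetricIcc ℤ)) :
    ∃ B C : ℝ, ∀ N d : ℕ, |∑ k ∈ Icc (-N : ℤ) N, g (k - d)| ≤ B + C * √d := by
  rw [SummationFilter.hasSum_symmetricIcc_iff] at hg
  obtain ⟨B, hB⟩ := hg.abs.bddAbove_range
  refine ⟨B, 2 * √(∑' k, (g ^ 2) k), fun N d => ?_⟩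
  have hleft := abs_sum_comp_le_sqrt_mul_sqrt hsq (φ := fun i : ℕ => (-N - 1 - i : ℤ))
    (fun i j h => by simpa using h) (range d)
  have hright := abs_sum_comp_le_sqrt_mul_sqrt hsq (φ := fun i : ℕ => (N - i : ℤ))
    (fun i j h => by simpa using h) (range d)
  have hN : |∑ k ∈ Icc (-N : ℤ) N, g k| ≤ B := hB ⟨N, rfl⟩
  rw [card_range] at hleft hright
  rw [sum_Icc_neg_comp_sub]
  linarith [abs_add_le (∑ k ∈ Icc (-N : ℤ) N, g k)
      (∑ i ∈ range d, g (-N - 1 - i) - ∑ i ∈ range d, g (N - i)),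
    abs_sub (∑ i ∈ range d, g (-N - 1 - i)) (∑ i ∈ range d, g (N - i))]

lemma hasSum_symmetricIcc_tsum_mul_comp_sub {a : ℕ → ℝ} (ha : Summable fun d => |a d| * √d)
    (hsq : Summable (g ^ 2)) (hg : HasSum g ρ (.symmetricIcc ℤ)) :
    HasSum (fun k : ℤ => ∑' d, a d * g (k - d)) (∑' d, a d * ρ) (.symmetricIcc ℤ) := by
  have ha' : Summable fun d => |a d| := by
    refine .of_norm_bounded_eventually_nat ha ?_
    filter_upwards [eventually_ge_atTop 1] with d hd
    rw [Real.norm_eq_abs, abs_abs]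
    exact le_mul_of_one_le_right (abs_nonneg _) (Real.one_le_sqrt.2 (by exact_mod_cast hd))
  have hterm (k : ℤ) : Summable fun d : ℕ => a d * g (k - d) := by
    refine .of_norm_bounded (ha'.mul_right √(∑' k, (g ^ 2) k)) fun d => ?_
    rw [norm_mul, Real.norm_eq_abs, Real.norm_eq_abs]
    gcongr
    exact Real.abs_le_sqrt (hsq.le_tsum (k - d) fun k _ => sq_nonneg (g k))
  obtain ⟨B, C, hBC⟩ := exists_abs_sum_Icc_neg_comp_sub_le hsq hg
  rw [SummationFilter.hasSum_symmetricIcc_iff]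
  have hswap (N : ℕ) : ∑ k ∈ Icc (-N : ℤ) N, ∑' d, a d * g (k - d) =
      ∑' d : ℕ, a d * ∑ k ∈ Icc (-N : ℤ) N, g (k - d) := by
    rw [← Summable.tsum_finsetSum fun k _ => hterm k]
    simp only [mul_sum]
  simp only [hswap]
  refine tendsto_tsum_of_dominated_convergence (bound := fun d => B * |a d| + C * (|a d| * √d))
    ((ha'.mul_left B).add (ha.mul_left C)) (fun d => ?_) (.of_forall fun N d => ?_)
  · have hlim := hasSum_symmetricIcc_comp_sub hg (tendsto_cofinite_zero_of_summable_sq hsq) d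
    exact (SummationFilter.hasSum_symmetricIcc_iff.1 hlim).const_mul (a d)
  · calc ‖a d * ∑ k ∈ Icc (-N : ℤ) N, g (k - d)‖
        = |a d| * |∑ k ∈ Icc (-N : ℤ) N, g (k - d)| := by rw [Real.norm_eq_abs, abs_mul]
      _ ≤ |a d| * (B + C * √d) := by gcongr; exact hBC N d
      _ = B * |a d| + C * (|a d| * √d) := by ring

lemma hasSum_symmetricIcc_comp_toNat {c : ℕ → ℝ} (hc : c 0 = 0) {x : ℝ} (h : HasSum c x) :
    HasSum (c ∘ Int.toNat) x (.symmetricIcc ℤ) := by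
  have hint : HasSum (c ∘ Int.toNat) x := by
    refine (Nat.cast_injective.hasSum_iff fun k hk => ?_).1 (by simpa [Function.comp_def] using h)
    rw [Function.comp_apply, Int.toNat_of_nonpos, hc]
    by_contra! hk'
    exact hk ⟨k.toNat, Int.toNat_of_nonneg hk'.le⟩
  exact hint.mono_left (SummationFilter.symmetricIcc ℤ).le_atTop

lemma polarSpan_two_le_summingInto {w m : ℕ} :
    polarSpan 2 w m ≤ summingInto (.symmetricIcc ℤ) (Vspan w m) := by
  refine Submodule.span_le.2 fun f hf => ?_
  cases hf with
  | @pow w₁ v α hα hv hw =>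
    obtain ⟨ρ, hρ, hsum⟩ := intInv_pow_mem_summingInto hv
    exact ⟨α * ρ, Vspan_mono hw (add_zero m).le (Vspan_mul_mem hα hρ), hsum.mul_left α⟩
  | @atZero α hα =>
    have hsum : HasSum (Pi.single 0 α : ℤ → ℝ) α (.symmetricIcc ℤ) :=
      (hasSum_ite_eq 0 α _).congr_fun fun k => Pi.single_apply 0 α k
    exact ⟨α, hα, hsum⟩
  | @onNat w₁ b η hη hb hw =>
    obtain ⟨x, hx, hsum⟩ := natInv_pow_mul_mem_summingInto hb hη
    exact ⟨x, Vspan_mono hw le_rfl hx,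
      hasSum_symmetricIcc_comp_toNat (natInv_pow_mul_apply_zero _ (by lia)) hsum⟩
  | @poles w₁ b u η hη hb hu hw =>
    obtain ⟨ρ, hρ, hsum⟩ := intInv_pow_mem_summingInto hu
    have hsq : Summable ((intInv ^ u) ^ 2) := by
      rw [← pow_mul]
      exact summable_intInv_pow (by lia)
    have hη' : η ∈ slowGrowth := truncSpan_le_slowGrowth hη
    have hcoeff : Summable fun d => |(natInv ^ b * η) d| * √d :=
      summable_natInv_pow_mul_mul_sqrt hη' hb
    have hpoles : HasSum (poleSum u (natInv ^ b * η)) (∑' d, (natInv ^ b * η) d * ρ)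
        (.symmetricIcc ℤ) :=
      hasSum_symmetricIcc_tsum_mul_comp_sub (g := intInv ^ u) hcoeff hsq hsum
    refine ⟨_, ?_, hpoles⟩
    rw [tsum_mul_right]
    exact Vspan_mono hw (add_zero m).le (Vspan_mul_mem (tsum_natInv_pow_mul_mem hb hη) hρ)

end SymmetricSums

section ParityTheorem

/-- `f : ℤ → ℝ` extends `g : ℕ → ℝ` and is even or odd, according to the sign `s`, up to the error
`e` on the negative integers. -/
def IsParityExtension (s : ℝ) (g e : ℕ → ℝ) (f : ℤ → ℝ) : Prop :=
  ∀ k : ℕ, f k = g k ∧ f (-k) = s * (g k + e k)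

section IsParityExtension

variable {s : ℝ} {g e : ℕ → ℝ} {f Φ : ℤ → ℝ}

lemma isParityExtension_intInv_pow {b : ℕ} (hb : 1 ≤ b) (n : Fin 0 → ℕ) :
    IsParityExtension ((-1) ^ b) (natInv ^ b * truncMzv 0 n) 0 (intInv ^ b) := by
  intro k
  have hk : (natInv ^ b * truncMzv 0 n) k = (natInv ^ b) k := by
    rcases k.eq_zero_or_pos with rfl | hk
    · rw [natInv_pow_mul_apply_zero _ hb, ← mul_one (natInv ^ b), natInv_pow_mul_apply_zero _ hb]
    · simp [truncMzv, hk]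
  rw [hk, Pi.zero_apply, add_zero]
  exact ⟨by simp only [Pi.pow_apply, intInv_natCast], intInv_neg_natCast_pow k b⟩

lemma IsParityExtension.intInv_pow_mul (h : IsParityExtension s g e f) (b : ℕ) :
    IsParityExtension ((-1) ^ b * s) (natInv ^ b * g) (natInv ^ b * e) (intInv ^ b * f) := by
  intro k
  simp only [Pi.mul_apply, Pi.pow_apply, (h k).1, (h k).2, intInv_neg_natCast_pow, intInv_natCast]
  exact ⟨trivial, by ring⟩

lemma IsParityExtension.of_fwdDiff_eq (h : IsParityExtension s g e f) (hg : g 0 = 0)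
    (hΦ : fwdDiff 1 Φ = f) (hΦ0 : Φ 0 = 0) :
    IsParityExtension (-s) (partialSums g) (partialSums e + g + e) Φ := by
  have hdiff (k : ℤ) : Φ (k + 1) = Φ k + f k := by rw [← hΦ, fwdDiff, add_sub_cancel]
  have hf0 : s * (g 0 + e 0) = 0 := (h 0).2.symm.trans ((h 0).1.trans hg)
  intro k
  induction k with
  | zero => simp_all [partialSums]
  | succ k ih =>
    have hneg : Φ (-k) = Φ (-(k + 1 : ℕ)) + f (-(k + 1 : ℕ)) := by
      rw [← hdiff]
      push_cast
      ring_nf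
    simp only [Pi.add_apply] at ih ⊢
    rw [(h (k + 1)).2, ih.2] at hneg
    rw [Nat.cast_succ, hdiff, ih.1, (h k).1, ← Nat.cast_succ, partialSums_succ, partialSums_succ]
    exact ⟨rfl, by linear_combination -hneg⟩

lemma IsParityExtension.hasSum (h : IsParityExtension s g e f) (hg0 : g 0 = 0) {x y : ℝ}
    (hg : HasSum g x) (he : HasSum e y) : HasSum f (x + s * (x + y)) := by
  have hpos : HasSum (fun k : ℕ => f k) x := hg.congr_fun fun k => (h k).1
  have hneg : HasSum (fun k : ℕ => f (-k)) (s * (x + y)) :=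
    ((hg.add he).mul_left s).congr_fun fun k => (h k).2
  have hf0 : f 0 = 0 := (h 0).1.trans hg0
  simpa [hf0] using hpos.of_nat_of_neg hneg

end IsParityExtension

lemma sum_eq_sum_init_add {p : ℕ} (n : Fin (p + 1) → ℕ) :
    ∑ i, n i = ∑ i, Fin.init n i + n (Fin.last p) :=
  Fin.sum_univ_castSucc n

lemma exists_isParityExtension {p : ℕ} (n : Fin (p + 1) → ℕ) (hn : ∀ i, 1 ≤ n i) :
    ∃ f ∈ polarSpan (n (Fin.last p)) (∑ i, n i) p, ∃ e ∈ truncSpan (∑ i, Fin.init n i) p,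
      IsParityExtension ((-1) ^ (∑ i, n i + p))
        (natInv ^ n (Fin.last p) * truncMzv p (Fin.init n)) (natInv ^ n (Fin.last p) * e) f := by
  induction p with
  | zero =>
    have hone : (1 : ℤ → ℝ) ∈ extensionSpan 0 0 :=
      (IsExtensionTerm.const (one_mem_Vspan 0 0)).mem_extensionSpan
    refine ⟨intInv ^ n (Fin.last 0), ?_, 0, zero_mem _, ?_⟩
    · simpa using intInv_pow_mul_mem_polarSpan (hn _) hone
    · simpa using isParityExtension_intInv_pow (hn _) (Fin.init n)
  | succ p ih =>
    have hn' (i : Fin (p + 1)) : 1 ≤ Fin.init n i := hn _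
    obtain ⟨f, hf, e, he, h⟩ := ih (Fin.init n) hn'
    have hw := sum_eq_sum_init_add (Fin.init n)
    have hc := hn' (Fin.last p)
    set c := Fin.init n (Fin.last p)
    set T := truncMzv p (Fin.init (Fin.init n))
    have hE : partialSums (natInv ^ c * e) + natInv ^ c * T + natInv ^ c * e ∈
        truncSpan (∑ i, Fin.init n i) (p + 1) := by
      have hT : T ∈ truncSpan _ _ := truncMzv_mem_truncSpan fun i => hn' (Fin.castSucc i)
      rw [hw]
      exact add_mem (add_mem (partialSums_mem_truncSpan hc he) (natInv_pow_mul_mem_truncSpan c hT))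
        (truncSpan_mono le_rfl p.le_succ (natInv_pow_mul_mem_truncSpan c he))
    obtain ⟨Φ, hΦ, hdiff, hΦ0⟩ := exists_fwdDiff_eq_of_mem_polarSpan (polarSpan_anti hc hf)
    have hpar : IsParityExtension (-(-1) ^ (∑ i, Fin.init n i + p)) (truncMzv (p + 1) (Fin.init n))
        (partialSums (natInv ^ c * e) + natInv ^ c * T + natInv ^ c * e) Φ :=
      h.of_fwdDiff_eq (natInv_pow_mul_apply_zero _ hc) hdiff hΦ0
    rw [sum_eq_sum_init_add n]
    refine ⟨_, intInv_pow_mul_mem_polarSpan (hn _) hΦ, _, hE, ?_⟩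
    convert hpar.intInv_pow_mul (n (Fin.last (p + 1))) using 1
    ring

theorem mzv_mem_Vspan_of_odd {p : ℕ} (n : Fin (p + 1) → ℕ) (hn : ∀ i, 1 ≤ n i)
    (hl : 2 ≤ n (Fin.last p)) (hodd : Odd (∑ i, n i + (p + 1))) :
    mzv (p + 1) n ∈ Vspan (∑ i, n i) p := by
  obtain ⟨f, hf, e, he, h⟩ := exists_isParityExtension n hn
  have hsign : Even (∑ i, n i + p) := by grind
  obtain ⟨x, hx, hfx⟩ := polarSpan_two_le_summingInto (polarSpan_anti hl hf)
  obtain ⟨y, hy, hey⟩ := natInv_pow_mul_mem_summingInto hl he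
  have hsum := h.hasSum (natInv_pow_mul_apply_zero _ (hn _)) (hasSum_mzv n hn hl) hey
  have hxy := hfx.unique (hsum.mono_left (SummationFilter.symmetricIcc ℤ).le_atTop)
  rw [hsign.neg_one_pow, one_mul] at hxy
  have hmem := Submodule.smul_mem _ (1 / 2 : ℚ) (sub_mem hx (sum_eq_sum_init_add n ▸ hy))
  convert hmem using 1
  rw [hxy, Rat.smul_def]
  push_cast
  ring

end ParityTheorem

section Decomposition

variable {w m w₁ w₂ m₁ m₂ : ℕ} {x y : ℝ}

lemma mul_mem_Sspan (hx : x ∈ Vspan w₁ m₁) (hy : y ∈ Vspan w₂ m₂) (hw₁ : 1 ≤ w₁) (hw₂ : 1 ≤ w₂)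
    (hw : w₁ + w₂ ≤ w) (hm : m₁ + m₂ ≤ m) : x * y ∈ Sspan w m := by
  have h : x * y ∈ Submodule.span ℚ {x | ∃ y ∈ Vspan w₁ m₁, ∃ z ∈ Vspan w₂ m₂, x = y * z} :=
    Submodule.subset_span ⟨x, hx, y, hy, rfl⟩
  refine Submodule.mem_sup_right (Submodule.mem_iSup_of_mem w₁ (Submodule.mem_iSup_of_mem w₂
    (Submodule.mem_iSup_of_mem m₁ (Submodule.mem_iSup_of_mem m₂ ?_))))
  simpa only [hw₁, hw₂, hw, hm, iSup_pos] using h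

lemma Sspan_le_Vspan : Sspan w m ≤ Vspan w m := by
  refine sup_le (sup_le (Vspan_mono (by lia) le_rfl) (Vspan_mono le_rfl (by lia))) ?_
  refine iSup_le fun w₁ => iSup_le fun w₂ => iSup_le fun m₁ => iSup_le fun m₂ => iSup_le fun _ =>
    iSup_le fun _ => iSup_le fun hw => iSup_le fun hm => Submodule.span_le.2 ?_
  rintro _ ⟨y, hy, z, hz, rfl⟩
  exact Vspan_mono hw hm (Vspan_mul_mem hy hz)

lemma MZIndex.Admissible.two_le_weight {z : MZIndex} (hz : z.Admissible) : 2 ≤ z.weight :=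
  hz.2.trans (single_le_sum (f := z.2) (fun _ _ => Nat.zero_le _) (mem_univ _))

lemma IsMonomial.eq_one (hx : IsMonomial x 0 m) : x = 1 ∧ m = 0 := by
  obtain ⟨a, zs, hz, rfl, hw, rfl⟩ := hx
  obtain rfl : a = 0 := by lia
  rcases zs with _ | ⟨z, zs⟩
  · simp
  · have hz2 := (hz z List.mem_cons_self).two_le_weight
    rw [List.map_cons, List.sum_cons] at hw
    lia

lemma IsMonomial.exists_mzv_mul (hx : IsMonomial x w m) (hm : 1 ≤ m) :
    ∃ z : MZIndex, z.Admissible ∧ ∃ y w' m', IsMonomial y w' m' ∧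
      x = mzv (z.1 + 1) z.2 * y ∧ w = z.weight + w' ∧ m = z.depth + m' := by
  obtain ⟨a, zs, hz, rfl, rfl, rfl⟩ := hx
  rcases zs with _ | ⟨z, zs⟩
  · simp at hm
  · refine ⟨z, hz z List.mem_cons_self, _, _, _,
      ⟨a, zs, fun z' hz' => hz z' (List.mem_cons_of_mem z hz'), rfl, rfl, rfl⟩, ?_, ?_, ?_⟩
    · rw [List.map_cons, List.prod_cons, mul_left_comm]
    · rw [List.map_cons, List.sum_cons, Nat.add_left_comm]
    · rw [List.map_cons, List.sum_cons]

lemma IsMonomial.mem_Sspan (hx : IsMonomial x w m) (hm : 1 ≤ m) (hodd : Odd (w + m)) :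
    x ∈ Sspan w m := by
  obtain ⟨⟨p, n⟩, hz, y, w', m', hy, rfl, rfl, rfl⟩ := hx.exists_mzv_mul hm
  rcases w'.eq_zero_or_pos with rfl | hw'
  · obtain ⟨rfl, rfl⟩ := hy.eq_one
    rw [mul_one]
    exact Submodule.mem_sup_left (Submodule.mem_sup_right (mzv_mem_Vspan_of_odd n hz.1 hz.2 hodd))
  · exact mul_mem_Sspan (mzv_mem_Vspan p n hz.1 hz.2) hy.mem_Vspan
      (one_le_two.trans hz.two_le_weight) hw' le_rfl le_rfl

lemma Vspan_le_Sspan (hm : 1 ≤ m) (hodd : Odd (w + m)) : Vspan w m ≤ Sspan w m := by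
  refine Submodule.span_le.2 ?_
  rintro x ⟨w', m', hw', hm', hx⟩
  rcases hw'.lt_or_eq with hlt | rfl
  · exact Submodule.mem_sup_left (Submodule.mem_sup_left
      (Vspan_mono (by lia) hm' hx.mem_Vspan))
  rcases hm'.lt_or_eq with hlt | rfl
  · exact Submodule.mem_sup_left (Submodule.mem_sup_right
      (Vspan_mono le_rfl (by lia) hx.mem_Vspan))
  exact hx.mem_Sspan hm hodd

end Decomposition

/-- If `w + m` is odd then `V_{w,m} = S_{w,m}`; in particular every multiple zeta value of
weight `w` and depth `m` lies in `S_{w,m}`. -/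
theorem stmt6 (w m : ℕ) (hw : 1 ≤ w) (hm : 1 ≤ m) (hodd : Odd (w + m)) :
    Vspan w m = Sspan w m ∧
      ∀ n : Fin m → ℕ, (∀ i, 1 ≤ n i) → 2 ≤ n ⟨m - 1, by omega⟩ →
        (∑ i, n i) = w → mzv m n ∈ Sspan w m := by
  have heq : Vspan w m = Sspan w m := le_antisymm (Vspan_le_Sspan hm hodd) Sspan_le_Vspan
  refine ⟨heq, fun n hn hl hsum => ?_⟩
  obtain ⟨p, rfl⟩ : ∃ p, m = p + 1 := ⟨m - 1, by lia⟩
  subst hsum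
  exact heq ▸ mzv_mem_Vspan p n hn hl
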